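/- Suppose |V| = n with n even and n ≥ 4. Then the minimum total weight of a Hamiltonian cycle of (V,w) equals the minimum, over all S ⊆ V with |S| = n/2 and all distinct u, v ∈ S, of f(S,u,v) + f((V∖S) ∪ {u,v}, v, u). -/

import Mathlib

/-- The total weight of a walk given as a list of vertices: the sum of `w`
over consecutive pairs. -/
def pathCost {α : Type*} (w : α → α → ℕ∞) : List α → ℕ∞
  | [] => 0
  | [_] => 0
  | a :: b :: l => w a b + pathCost w (b :: l)

/-- `minPath w S u v` is the minimum, over all sequences listing each element of `S`
exactly once that start at `u` and end at `v`, of the sum of `w` over consecutive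
pairs; it is `⊤` if no such sequence exists. -/
noncomputable def minPath {α : Type*} [DecidableEq α]
    (w : α → α → ℕ∞) (S : Finset α) (u v : α) : ℕ∞ :=
  sInf {c | ∃ l : List α, l.Nodup ∧ l.toFinset = S ∧
      l.head? = some u ∧ l.getLast? = some v ∧ c = pathCost w l}

/-- The minimum total weight of a Hamiltonian cycle: the minimum over all cyclic
sequences visiting every vertex exactly once of the sum of `w` over all consecutive
pairs, including the pair closing the cycle (`⊤` if none of finite weight exists).
The closing edge is accounted for by appending the first vertex to the end. -/
noncomputable def minHamCycle {α : Type*} [Fintype α] [DecidableEq α]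
    (w : α → α → ℕ∞) : ℕ∞ :=
  sInf {c | ∃ l : List α, l.Nodup ∧ l.toFinset = Finset.univ ∧
      c = pathCost w (l ++ l.take 1)}

theorem pathCost_split {α : Type*} (w : α → α → ℕ∞) (v : α) (B : List α) :
    ∀ A : List α, pathCost w (A ++ v :: B) = pathCost w (A ++ [v]) + pathCost w (v :: B)
  | [] => by simp [pathCost]
  | [a] => by simp [pathCost]
  | a :: b :: l => by
      have := pathCost_split w v B (b :: l)
      simp only [List.cons_append, pathCost] at this ⊢
      rw [this, add_assoc]

theorem list_ends {α : Type*} {u v : α} (huv : u ≠ v) (l : List α)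
    (h1 : l.head? = some u) (h2 : l.getLast? = some v) : ∃ M, l = u :: (M ++ [v]) := by
  obtain ⟨t, rfl⟩ := List.head?_eq_some_iff.1 h1
  obtain ⟨t', ht⟩ := List.getLast?_eq_some_iff.1 h2
  cases t' with
  | nil => simp at ht; exact absurd ht.1 huv
  | cons a t' =>
    simp only [List.cons_append, List.cons.injEq] at ht
    exact ⟨t', by rw [ht.2]⟩

theorem minPath_attained {α : Type*} [DecidableEq α]
    (w : α → α → ℕ∞) (S : Finset α) (u v : α) : minPath w S u v = ⊤ ∨
    ∃ l : List α, l.Nodup ∧ l.toFinset = S ∧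
      l.head? = some u ∧ l.getLast? = some v ∧ minPath w S u v = pathCost w l := by
  unfold minPath
  rcases Set.eq_empty_or_nonempty {c | ∃ l : List α, l.Nodup ∧ l.toFinset = S ∧
      l.head? = some u ∧ l.getLast? = some v ∧ c = pathCost w l} with h | h
  · left; rw [h, sInf_empty]
  · right; exact csInf_mem h

/-- If `|V| = n` with `n` even, `n ≥ 4`, then the minimum total weight of a
Hamiltonian cycle of `(V, w)` equals
`min_{S ⊆ V, |S| = n/2} min_{u, v ∈ S, u ≠ v} ( f(S,u,v) + f((V∖S) ∪ {u,v}, v, u) )`. -/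
theorem minHamCycle_eq_split {α : Type*} [Fintype α] [DecidableEq α]
    (w : α → α → ℕ∞) (n : ℕ) (hn : n = Fintype.card α)
    (heven : Even n) (hn4 : 4 ≤ n) :
    minHamCycle w =
      ((Finset.univ : Finset α).powerset.filter (fun S => S.card = n / 2)).inf
        (fun S => S.inf (fun u => (S.erase u).inf (fun v =>
          minPath w S u v + minPath w ((Finset.univ \ S) ∪ {u, v}) v u))) := by
  apply le_antisymm
  · refine Finset.le_inf fun S hS => Finset.le_inf fun u hu => Finset.le_inf fun v hv => ?_
    have hvu : v ≠ u := Finset.ne_of_mem_erase hv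
    rcases minPath_attained w S u v with h | ⟨l1, n1, s1, a1, b1, c1⟩
    · simp [h]
    rcases minPath_attained w ((Finset.univ \ S) ∪ {u, v}) v u with h | ⟨l2, n2, s2, a2, b2, c2⟩
    · rw [h, add_top]; exact le_top
    rw [c1, c2]
    obtain ⟨M, rfl⟩ := list_ends hvu.symm l1 a1 b1
    obtain ⟨B, rfl⟩ := list_ends hvu l2 a2 b2
    have hB : ∀ x ∈ B, x ∉ S := by
      intro x hx hxS
      have : x ∈ (Finset.univ \ S) ∪ {u, v} := by rw [← s2]; simp [hx]
      simp [hxS] at this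
      rcases this with rfl | rfl <;> grind
    apply sInf_le
    refine ⟨u :: (M ++ [v]) ++ B, ?_, ?_, ?_⟩
    · refine List.nodup_append.2 ⟨n1, by grind, ?_⟩
      rintro a ha b hb rfl
      exact hB a hb (by rw [← s1]; exact List.mem_toFinset.2 ha)
    · ext x
      simp only [Finset.mem_univ, iff_true]
      by_cases hx : x ∈ S
      · rw [List.toFinset_append, s1]; exact Finset.mem_union_left _ hx
      · have : x ∈ (v :: (B ++ [u])).toFinset := by rw [s2]; simp [hx]
        simp at this ⊢
        tauto
    · have := pathCost_split w v (B ++ [u]) (u :: M)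
      simpa using this.symm
  · apply le_sInf
    rintro c ⟨l, nd, hl, rfl⟩
    have hlen : l.length = n := by
      rw [hn, ← List.toFinset_card_of_nodup nd, hl, Finset.card_univ]
    have hA : (l.take (n / 2)).length = n / 2 := by
      rw [List.length_take]; omega
    obtain ⟨A, B, rfl, hAl⟩ : ∃ A B, l = A ++ B ∧ A.length = n / 2 :=
      ⟨_, _, (List.take_append_drop (n / 2) l).symm, hA⟩
    obtain ⟨u, M, v, rfl⟩ : ∃ u M v, A = u :: (M ++ [v]) := by
      cases A with
      | nil => simp at hAl; omega
      | cons u t =>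
        rcases List.eq_nil_or_concat t with rfl | ⟨M, v, rfl⟩
        · simp at hAl; omega
        · exact ⟨u, M, v, by simp⟩
    have nA := (List.nodup_append.1 nd).1
    have nB := (List.nodup_append.1 nd).2.1
    have nAB := (List.nodup_append.1 nd).2.2
    have hvu : v ≠ u := by rintro rfl; simp at nA
    have cost := pathCost_split w v (B ++ [u]) (u :: M)
    have e : pathCost w (u :: (M ++ [v]) ++ B ++ (u :: (M ++ [v]) ++ B).take 1)
      = pathCost w (u :: (M ++ [v])) + pathCost w (v :: (B ++ [u])) := by simpa using cost
    rw [e]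
    set S := (u :: (M ++ [v])).toFinset with hS
    refine (Finset.inf_le (b := S) ?_).trans ((Finset.inf_le (b := u) ?_).trans
      ((Finset.inf_le (b := v) ?_).trans (add_le_add (sInf_le ?_) (sInf_le ?_))))
    · simp only [Finset.powerset_univ, Finset.mem_filter, Finset.mem_univ, true_and]
      rw [hS, List.toFinset_card_of_nodup nA, hAl]
    · simp [hS]
    · simp [hS, hvu]
    · exact ⟨_, nA, rfl, by simp, by simp [List.getLast?_cons], rfl⟩
    · refine ⟨_, ?_, ?_, by simp, by simp [List.getLast?_cons], rfl⟩
      · grind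
      · ext x
        have hx : x ∈ (u :: (M ++ [v]) ++ B).toFinset := by rw [hl]; simp
        have := nAB x
        simp [hS] at hx ⊢
        grind
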